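/- arXiv:2006.08395 — 6 statements merged into one kernel-verified Lean document; each statement's English description precedes it below -/
import Mathlib

section
/- Let f ∈ ℝ[X] be a polynomial and F ∈ ℝ[Z,Y,X] a polynomial in three variables, and let H = H_{F,f} ∈ ℝ[X,A] be the associated polynomial. Then the following are equivalent: (a) the variable A divides H in ℝ[X,A], i.e. H = A·G for some G ∈ ℝ[X,A]; (b) for every nonzero infinitesimal α ∈ ℝ* and every real number x (embedded into ℝ*), the evaluation H(x,α) is infinitesimal. In other words, f is a hyper-solution of F on the standard reals if and only if H_{F,f} is divisible by A. -/
open MvPolynomial Hyperreal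

/-- The ring hom embedding `ℝ` into the hyperreals `ℝ*`. -/
noncomputable def realToHyper : ℝ →+* ℝ* where
  toFun r := (r : ℝ*)
  map_one' := Hyperreal.coe_one
  map_mul' := Hyperreal.coe_mul
  map_zero' := Hyperreal.coe_zero
  map_add' := Hyperreal.coe_add

/-- `f(X+A)` as an element of `K[X,A]` (variable `0` is `X`, variable `1` is `A`). -/
noncomputable def shiftPoly {K : Type*} [CommSemiring K] (f : Polynomial K) :
    MvPolynomial (Fin 2) K :=
  Polynomial.aeval (MvPolynomial.X 0 + MvPolynomial.X 1) f

/-- `f(X)` as an element of `K[X,A]` (variable `0` is `X`, variable `1` is `A`). -/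
noncomputable def injPoly {K : Type*} [CommSemiring K] (f : Polynomial K) :
    MvPolynomial (Fin 2) K :=
  Polynomial.aeval (MvPolynomial.X 0) f

/-- `Q` is the difference-quotient polynomial of `f`, i.e. `A·Q = f(X+A) − f(X)` in `K[X,A]`. -/
def IsDiffQuot {K : Type*} [CommRing K] (f : Polynomial K) (Q : MvPolynomial (Fin 2) K) : Prop :=
  MvPolynomial.X 1 * Q = shiftPoly f - injPoly f

/-- The associated polynomial `H_{F,f} ∈ K[X,A]` of `F ∈ K[Z,Y,X]` (variables `Z = 0`, `Y = 1`,
`X = 2`) and `f ∈ K[X]`, given the difference-quotient polynomial `Q` of `f`: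
substitute `Z := Q`, `Y := f(X)`, `X := X`. -/
noncomputable def Hpoly {K : Type*} [CommRing K] (F : MvPolynomial (Fin 3) K) (f : Polynomial K)
    (Q : MvPolynomial (Fin 2) K) : MvPolynomial (Fin 2) K :=
  MvPolynomial.aeval ![Q, injPoly f, MvPolynomial.X 0] F

/-! Divisibility by `X i` means vanishing at `X i = 0`, and over an infinite domain this can be
tested on points. Taking standard parts is a ring homomorphism on finite elements, so the standard
part of `H(x, α)` is `H(x, 0)` whenever `x` is real and `α` is infinitesimal. Hence a single
infinitesimal `α` already detects divisibility of `H` by `A`. -/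

section Divisibility

variable {σ R : Type*}

lemma aeval_sub_aeval_mem_of_sub_mem {A : Type*} [CommSemiring R] [CommRing A] [Algebra R A]
    {I : Ideal A} {f g : σ → A} (hfg : ∀ j, f j - g j ∈ I) (p : MvPolynomial σ R) :
    aeval f p - aeval g p ∈ I := by
  have mk_eq : (fun j => Ideal.Quotient.mk I (f j)) = fun j => Ideal.Quotient.mk I (g j) :=
    _root_.funext fun j => Ideal.Quotient.eq.2 (hfg j)
  rw [← Ideal.Quotient.eq, map_aeval, map_aeval, mk_eq]

variable [DecidableEq σ]

lemma X_dvd_sub_bind₁_update_X [CommRing R] (i : σ) (p : MvPolynomial σ R) :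
    X i ∣ p - bind₁ (Function.update X i 0) p := by
  have X_sub_mem (j : σ) :
      (X j - Function.update X i 0 j : MvPolynomial σ R) ∈ Ideal.span {X i} := by
    obtain rfl | hj := eq_or_ne j i
    · simp
    · simp [hj]
  simpa [Ideal.mem_span_singleton] using aeval_sub_aeval_mem_of_sub_mem X_sub_mem p

lemma eval_bind₁_update_X [CommSemiring R] (x : σ → R) (i : σ) (p : MvPolynomial σ R) :
    eval x (bind₁ (Function.update X i 0) p) = eval (Function.update x i 0) p := by
  have eval_update :
      (fun j => eval x (Function.update X i 0 j)) = Function.update x i 0 := by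
    ext j
    obtain rfl | hj := eq_or_ne j i
    · simp
    · simp [hj]
  rw [← eval_update]
  exact eval₂Hom_bind₁ _ _ _ _

lemma X_dvd_iff_forall_eval_update_eq_zero [CommRing R] [IsDomain R] [Infinite R] {i : σ}
    {p : MvPolynomial σ R} : X i ∣ p ↔ ∀ x : σ → R, eval (Function.update x i 0) p = 0 := by
  constructor
  · rintro ⟨q, rfl⟩ x
    simp
  · intro h
    have bind₁_eq_zero : bind₁ (Function.update X i 0) p = 0 :=
      MvPolynomial.funext fun x => by rw [eval_bind₁_update_X, h, map_zero]
    simpa [bind₁_eq_zero] using X_dvd_sub_bind₁_update_X i p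

end Divisibility

section StandardPart

open ArchimedeanClass

lemma mk_eval₂_nonneg {σ R S : Type*} [CommRing R] [LinearOrder R] [IsStrictOrderedRing R]
    [Archimedean R] [CommRing S] [LinearOrder S] [IsStrictOrderedRing S] (φ : R →+*o S)
    {x : σ → S} (hx : ∀ i, 0 ≤ mk (x i)) (p : MvPolynomial σ R) :
    0 ≤ mk (eval₂ (φ : R →+* S) x p) := by
  induction p using MvPolynomial.induction_on with
  | C r => simpa using mk_map_nonneg_of_archimedean φ r
  | add p q hp hq =>
    rw [eval₂_add]
    exact (le_min hp hq).trans (min_le_mk_add _ _)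
  | mul_X p i hp =>
    rw [eval₂_mul, eval₂_X, mk_mul]
    exact add_nonneg hp (hx i)

variable {σ K : Type*} [Field K] [LinearOrder K] [IsOrderedRing K] (φ : ℝ →+*o K)

lemma stdPart_eval₂ {x : σ → K} (hx : ∀ i, 0 ≤ mk (x i)) (p : MvPolynomial σ ℝ) :
    stdPart (eval₂ (φ : ℝ →+* K) x p) = eval (fun i => stdPart (x i)) p := by
  induction p using MvPolynomial.induction_on with
  | C r => simp
  | add p q hp hq =>
    rw [eval₂_add, stdPart_add (mk_eval₂_nonneg φ hx p) (mk_eval₂_nonneg φ hx q), hp, hq, map_add]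
  | mul_X p i hp =>
    rw [eval₂_mul, eval₂_X, stdPart_mul (mk_eval₂_nonneg φ hx p) (hx i), hp, map_mul, eval_X]

lemma mk_eval₂_pos_iff {x : σ → K} (hx : ∀ i, 0 ≤ mk (x i)) (p : MvPolynomial σ ℝ) :
    0 < mk (eval₂ (φ : ℝ →+* K) x p) ↔ eval (fun i => stdPart (x i)) p = 0 := by
  rw [← stdPart_eval₂ φ hx, stdPart_eq_zero, (mk_eval₂_nonneg φ hx p).lt_iff_ne']

lemma mk_eval₂_update_pos_iff [DecidableEq σ] {α : K} (hα : 0 < mk α) (x : σ → ℝ) (i : σ)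
    (p : MvPolynomial σ ℝ) :
    0 < mk (eval₂ (φ : ℝ →+* K) (Function.update (fun j => φ (x j)) i α) p) ↔
      eval (Function.update x i 0) p = 0 := by
  have update_finite (j : σ) : 0 ≤ mk (Function.update (fun j => φ (x j)) i α j) := by
    obtain rfl | hj := eq_or_ne j i
    · simpa using hα.le
    · simpa [hj] using mk_map_nonneg_of_archimedean φ (x j)
  have stdPart_update :
      (fun j => stdPart (Function.update (fun j => φ (x j)) i α j)) = Function.update x i 0 := by
    ext j
    obtain rfl | hj := eq_or_ne j i
    · simpa using hα.ne'
    · simp [hj]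
  rw [mk_eval₂_pos_iff φ update_finite, stdPart_update]

lemma X_dvd_iff_forall_mk_eval₂_update_pos [DecidableEq σ] {α : K} (hα : 0 < mk α) {i : σ}
    {p : MvPolynomial σ ℝ} :
    X i ∣ p ↔
      ∀ x : σ → ℝ, 0 < mk (eval₂ (φ : ℝ →+* K) (Function.update (fun j => φ (x j)) i α) p) := by
  simp only [X_dvd_iff_forall_eval_update_eq_zero, mk_eval₂_update_pos_iff φ hα]

theorem stmt_0_general {α : K} (hα : 0 < mk α) (H : MvPolynomial (Fin 2) ℝ) :
    X 1 ∣ H ↔ ∀ x : ℝ, 0 < mk (eval₂ (φ : ℝ →+* K) ![φ x, α] H) := by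
  have update_one (x : Fin 2 → ℝ) :
      Function.update (fun j => φ (x j)) 1 α = ![φ (x 0), α] := by
    ext j
    fin_cases j <;> rfl
  simp only [X_dvd_iff_forall_mk_eval₂_update_pos φ hα, update_one]
  exact ⟨fun h x => h ![x, 0], fun h x => h (x 0)⟩

end StandardPart

/-- `f` is a hyper-solution of `F` on the standard reals iff `A` divides
`H_{F,f}` in `ℝ[X,A]`. -/
theorem stmt_0 (f : Polynomial ℝ) (F : MvPolynomial (Fin 3) ℝ) (Q : MvPolynomial (Fin 2) ℝ)
    (hQ : IsDiffQuot f Q) :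
    (MvPolynomial.X 1 ∣ Hpoly F f Q) ↔
      ∀ (α : ℝ*) (x : ℝ), α ≠ 0 → Infinitesimal α →
        Infinitesimal (MvPolynomial.eval₂ realToHyper ![(x : ℝ*), α] (Hpoly F f Q)) :=
  ⟨fun h _ x _ hα => infinitesimal_iff.2 <|
      (stmt_0_general coeRingHom (infinitesimal_iff.1 hα) _).1 h x,
    fun h => (stmt_0_general coeRingHom archimedeanClassMk_epsilon_pos _).2 fun x =>
      infinitesimal_iff.1 <| h ε x epsilon_ne_zero infinitesimal_epsilon⟩
end

section
/- Let f ∈ ℝ[X] and F ∈ ℝ[Z,Y,X], and suppose the associated polynomial has the hyper Taylor form H_{F,f} = r·X^n + A·G with r ∈ ℝ, r ≠ 0, an integer n ≥ 1, and G ∈ ℝ[X,A] whose degree in X is smaller than n. Then for every nonzero infinitesimal α ∈ ℝ* and every hyperreal x ∈ ℝ*, the equation H_{F,f}(x,α) = 0 implies that x is infinitesimal. -/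
open MvPolynomial Hyperreal

/-!
Under the valuation whose integers are the finite hyperreals and whose maximal ideal consists of
the infinitesimals, nonzero reals have value `1`. If the root `x` were not infinitesimal, its value
would be at least `1`, so `v(G(x, α)) ≤ v(x) ^ n` because `deg_X G ≤ n`. Since `v(α) < 1`, the term
`α * G(x, α)` is then strictly dominated by `r * x ^ n`, and the two cannot cancel.
-/

section Valuation

variable {R L σ : Type*} [CommSemiring R] [CommRing L] {φ : R →+* L} {y : σ → L} {i : σ}

section Monoid

variable {Γ₀ : Type*} [LinearOrderedCommMonoidWithZero Γ₀] {v : Valuation L Γ₀}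

theorem valuation_finsuppProd_pow_le (hy : ∀ k ≠ i, v (y k) ≤ 1) (d : σ →₀ ℕ) :
    v (d.prod fun k e ↦ y k ^ e) ≤ v (y i) ^ d i := by
  have hothers : v ((d.erase i).prod fun k e ↦ y k ^ e) ≤ 1 := by
    rw [Finsupp.prod, map_prod]
    refine Finset.prod_le_one' fun k hk ↦ ?_
    have hki : k ≠ i := by
      rintro rfl
      simp at hk
    rw [map_pow]
    exact pow_le_one' (hy k hki) _
  rw [← Finsupp.mul_prod_erase' d i _ fun _ ↦ pow_zero _, map_mul, map_pow]
  exact mul_le_of_le_one_right' hothers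

theorem valuation_eval₂_le_pow_degreeOf (hφ : ∀ c, v (φ c) ≤ 1) (hy : ∀ k ≠ i, v (y k) ≤ 1)
    (hi : 1 ≤ v (y i)) (p : MvPolynomial σ R) :
    v (eval₂ φ y p) ≤ v (y i) ^ degreeOf i p := by
  rw [eval₂_eq]
  refine v.map_sum_le fun d hd ↦ ?_
  calc v (φ (coeff d p) * ∏ k ∈ d.support, y k ^ d k)
      = v (φ (coeff d p)) * v (d.prod fun k e ↦ y k ^ e) := v.map_mul _ _
    _ ≤ 1 * v (y i) ^ d i := mul_le_mul' (hφ _) (valuation_finsuppProd_pow_le hy d)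
    _ = v (y i) ^ d i := one_mul _
    _ ≤ v (y i) ^ degreeOf i p := pow_le_pow_right₀ hi (monomial_le_degreeOf i hd)

end Monoid

theorem stmt_1_general {Γ₀ : Type*} [LinearOrderedCommGroupWithZero Γ₀] {v : Valuation L Γ₀}
    {j : σ} {r : R} {n : ℕ} {G : MvPolynomial σ R}
    (hφ : ∀ c, v (φ c) ≤ 1) (hr : v (φ r) = 1) (hG : degreeOf i G ≤ n)
    (hy : ∀ k ≠ i, v (y k) ≤ 1) (hj : v (y j) < 1)
    (hz : eval₂ φ y (C r * X i ^ n + X j * G) = 0) : v (y i) < 1 := by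
  by_contra! hi
  have hpos : 0 < v (y i) ^ n := pow_pos (zero_lt_one.trans_le hi) n
  have hG_le : v (eval₂ φ y G) ≤ v (y i) ^ n :=
    (valuation_eval₂_le_pow_degreeOf hφ hy hi G).trans (pow_le_pow_right₀ hi hG)
  have hlead : v (φ r * y i ^ n) = v (y i) ^ n := by rw [map_mul, hr, one_mul, map_pow]
  have htail : v (y j * eval₂ φ y G) < v (φ r * y i ^ n) :=
    calc v (y j * eval₂ φ y G) = v (y j) * v (eval₂ φ y G) := v.map_mul _ _
      _ ≤ v (y j) * v (y i) ^ n := mul_le_mul_right hG_le _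
      _ < v (y i) ^ n := mul_lt_of_lt_one_left hpos hj
      _ = v (φ r * y i ^ n) := hlead.symm
  have hcancel : φ r * y i ^ n + y j * eval₂ φ y G = 0 := by
    simpa only [eval₂_add, eval₂_mul, eval₂_pow, eval₂_C, eval₂_X] using hz
  have hzero : v (φ r * y i ^ n) = 0 := by
    rw [← v.map_add_eq_of_lt_left htail, hcancel, map_zero]
  exact hpos.ne' (hlead.symm.trans hzero)

end Valuation

/-- The multiplicative valuation on `ℝ*` given by the Archimedean class, whose valuation ring is the
ring of finite hyperreals. The order on Archimedean classes is reversed, so values at most `1` are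
those of finite elements and values below `1` those of infinitesimals. -/
noncomputable def hyperrealValuation : Valuation ℝ* (Multiplicative (ArchimedeanClass ℝ*)ᵒᵈ) :=
  (ArchimedeanClass.addValuation ℝ*).toValuation

theorem infinitesimal_iff_hyperrealValuation_lt_one {x : ℝ*} :
    Infinitesimal x ↔ hyperrealValuation x < 1 :=
  infinitesimal_iff

theorem hyperrealValuation_realToHyper_le_one (r : ℝ) : hyperrealValuation (realToHyper r) ≤ 1 :=
  archimedeanClassMk_coe_nonneg r

theorem hyperrealValuation_realToHyper_eq_one {r : ℝ} (hr : r ≠ 0) :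
    hyperrealValuation (realToHyper r) = 1 :=
  archimdeanClassMk_coe hr

/-- If `H_{F,f}` has the hyper Taylor form `r·X^n + A·G` with `r ≠ 0`,
`n ≥ 1` and `deg_X G < n`, then any hyperreal zero of `H_{F,f}(·,α)` (for `α` a nonzero
infinitesimal) is infinitesimal. -/
theorem stmt_1 (f : Polynomial ℝ) (F : MvPolynomial (Fin 3) ℝ) (Q : MvPolynomial (Fin 2) ℝ)
    (hQ : IsDiffQuot f Q) (r : ℝ) (n : ℕ) (G : MvPolynomial (Fin 2) ℝ)
    (hr : r ≠ 0) (hn : 1 ≤ n) (hG : MvPolynomial.degreeOf 0 G < n)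
    (hH : Hpoly F f Q = MvPolynomial.C r * MvPolynomial.X 0 ^ n + MvPolynomial.X 1 * G) :
    ∀ (α x : ℝ*), α ≠ 0 → Infinitesimal α →
      MvPolynomial.eval₂ realToHyper ![x, α] (Hpoly F f Q) = 0 → Infinitesimal x := by
  intro α x _ hα hz
  rw [infinitesimal_iff_hyperrealValuation_lt_one] at hα ⊢
  exact stmt_1_general (i := 0) (j := 1) (y := ![x, α]) hyperrealValuation_realToHyper_le_one
    (hyperrealValuation_realToHyper_eq_one hr) hG.le
    (Fin.forall_fin_two.2 ⟨by simp, fun _ ↦ hα.le⟩) hα (hH ▸ hz)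
end

section
/- Let f ∈ ℝ[X] and F ∈ ℝ[Z,Y,X], and suppose f is a hyper local approximation of F, i.e. H_{F,f} = P(X) + A·G with P ∈ ℝ[X] having zero constant coefficient and G ∈ ℝ[X,A] whose degree in X is smaller than the degree of P. Then for every infinitesimal x ∈ ℝ* and every nonzero infinitesimal α ∈ ℝ*, the evaluation H_{F,f}(x,α) is infinitesimal; that is, every hyper local approximation of F is a hyper-solution of F on the set of infinitesimal hyperreals. -/
open MvPolynomial Hyperreal

/-!
Coefficients from an Archimedean ring are finite, and the infinitesimals form an ideal in the ring
of finite elements. Hence a polynomial evaluated at infinitesimals differs from its constant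
coefficient by an infinitesimal, and the constant coefficient of `P(X) + A·G` is that of `P`.
Archimedean classes are ordered in reverse: `0 < mk x` says that `x` is infinitesimal, and
`0 ≤ mk x` that it is finite.
-/

section AddValuation

variable {σ R S Γ : Type*} [CommSemiring R] [CommRing S]
  [LinearOrderedAddCommMonoidWithTop Γ] [Nontrivial Γ]

theorem zero_lt_top : (0 : Γ) < ⊤ := by
  rw [lt_top_iff_ne_top]
  intro zero_eq_top
  obtain ⟨a, a_ne_top⟩ := exists_ne (⊤ : Γ)
  apply a_ne_top
  rw [← add_zero a, zero_eq_top, add_top]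

theorem addValuation_eval₂_sub_constantCoeff_pos (v : AddValuation S Γ) {φ : R →+* S}
    (hφ : ∀ r, 0 ≤ v (φ r)) {x : σ → S} (hx : ∀ i, 0 < v (x i)) (p : MvPolynomial σ R) :
    0 < v (eval₂ φ x p - φ (constantCoeff p)) := by
  induction p using MvPolynomial.induction_on with
  | C a =>
    rw [eval₂_C, constantCoeff_C, sub_self, v.map_zero]
    exact zero_lt_top
  | add p q hp hq =>
    rw [eval₂_add, map_add, map_add, add_sub_add_comm]
    exact v.map_lt_add hp hq
  | mul_X p i hp =>
    have eval₂_nonneg : 0 ≤ v (eval₂ φ x p) := by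
      simpa only [sub_add_cancel] using v.map_le_add hp.le (hφ (constantCoeff p))
    rw [eval₂_mul, eval₂_X, map_mul, constantCoeff_X, mul_zero, map_zero, sub_zero, v.map_mul]
    exact (hx i).trans_le (le_add_of_nonneg_left eval₂_nonneg)

theorem addValuation_eval₂_pos (v : AddValuation S Γ) {φ : R →+* S} (hφ : ∀ r, 0 ≤ v (φ r))
    {x : σ → S} (hx : ∀ i, 0 < v (x i)) {p : MvPolynomial σ R} (hp : constantCoeff p = 0) :
    0 < v (eval₂ φ x p) := by
  simpa only [hp, map_zero, sub_zero] using addValuation_eval₂_sub_constantCoeff_pos v hφ hx p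

end AddValuation

theorem constantCoeff_injPoly {K : Type*} [CommSemiring K] (p : Polynomial K) :
    constantCoeff (injPoly p) = p.coeff 0 := by
  rw [injPoly, Polynomial.aeval_def, Polynomial.hom_eval₂, algebraMap_eq, constantCoeff_comp_C,
    constantCoeff_X, Polynomial.eval₂_id, Polynomial.coeff_zero_eq_eval_zero]

theorem constantCoeff_injPoly_add_X_mul {K : Type*} [CommSemiring K] (P : Polynomial K)
    (G : MvPolynomial (Fin 2) K) : constantCoeff (injPoly P + X 1 * G) = P.coeff 0 := by
  rw [map_add, map_mul, constantCoeff_X, zero_mul, add_zero, constantCoeff_injPoly]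

theorem stmt_4_general {R K : Type*} [LinearOrder R] [CommRing R] [IsStrictOrderedRing R]
    [Archimedean R] [LinearOrder K] [CommRing K] [IsStrictOrderedRing K] (φ : R →+*o K)
    {f : Polynomial R} {F : MvPolynomial (Fin 3) R} {Q : MvPolynomial (Fin 2) R}
    (_hQ : IsDiffQuot f Q) {P : Polynomial R} {G : MvPolynomial (Fin 2) R} (hP0 : P.coeff 0 = 0)
    (hH : Hpoly F f Q = injPoly P + X 1 * G) {x α : K} (hx : 0 < ArchimedeanClass.mk x)
    (hα : 0 < ArchimedeanClass.mk α) :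
    0 < ArchimedeanClass.mk (eval₂ (φ : R →+* K) ![x, α] (Hpoly F f Q)) := by
  have finite_coeff (r : R) : 0 ≤ ArchimedeanClass.addValuation K (φ r) :=
    ArchimedeanClass.mk_map_nonneg_of_archimedean φ r
  have infinitesimal_point (i : Fin 2) : 0 < ArchimedeanClass.addValuation K (![x, α] i) := by
    fin_cases i
    exacts [hx, hα]
  refine addValuation_eval₂_pos (ArchimedeanClass.addValuation K) finite_coeff
    infinitesimal_point ?_
  rw [hH, constantCoeff_injPoly_add_X_mul, hP0]

/-- Every hyper local approximation of `F` is a hyper-solution of `F` on the set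
of infinitesimal hyperreals. -/
theorem stmt_4 (f : Polynomial ℝ) (F : MvPolynomial (Fin 3) ℝ) (Q : MvPolynomial (Fin 2) ℝ)
    (hQ : IsDiffQuot f Q) (P : Polynomial ℝ) (G : MvPolynomial (Fin 2) ℝ)
    (hP0 : P.coeff 0 = 0) (hG : MvPolynomial.degreeOf 0 G < P.natDegree)
    (hH : Hpoly F f Q = injPoly P + MvPolynomial.X 1 * G) :
    ∀ (x α : ℝ*), Infinitesimal x → α ≠ 0 → Infinitesimal α →
      Infinitesimal (MvPolynomial.eval₂ realToHyper ![x, α] (Hpoly F f Q)) := by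
  intro x α hx _ hα
  rw [infinitesimal_iff] at hx hα ⊢
  exact stmt_4_general coeRingHom hQ hP0 hH hx hα
end

section
/- The differential equation F(Z,Y,X) = X·Z − 1 is logarithm-like solvable. Precisely: fix x₀ ∈ ℂ with x₀ ≠ 0, let F₁ = (X+1)·Z − 1 and F_{x₀} = (X+x₀)·Z − 1 in ℂ[Z,Y,X], let f₁ ∈ ℂ[X], and define f̃ ∈ ℂ[X] by f̃(X) = f₁(x₀⁻¹·X). Then H_{F_{x₀},f̃}(X,A) = H_{F₁,f₁}(x₀⁻¹·X, x₀⁻¹·A). Consequently, if f₁ is a hyper Taylor approximation of F₁ with H_{F₁,f₁} = r·X^n + A·G (n ≥ 1, degree of G in X smaller than n), then f̃ is a hyper Taylor approximation of F_{x₀}, with H_{F_{x₀},f̃} = (r/x₀^n)·X^n + A·G̃ where G̃(X,A) = x₀⁻¹·G(x₀⁻¹·X, x₀⁻¹·A) has degree in X smaller than n. -/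
open MvPolynomial Hyperreal

/-- The algebra map `K[X,A] → K[X,A]` substituting `X ↦ c·X`, `A ↦ c·A`. -/
noncomputable def scaleVars {K : Type*} [CommSemiring K] (c : K) :
    MvPolynomial (Fin 2) K →ₐ[K] MvPolynomial (Fin 2) K :=
  MvPolynomial.aeval ![MvPolynomial.C c * MvPolynomial.X 0, MvPolynomial.C c * MvPolynomial.X 1]

/-!
Under `X ↦ cX`, `A ↦ cA` the identity `A·Q = f(X+A) − f(X)` becomes
`A·(c·Q(cX, cA)) = f̃(X+A) − f̃(X)` for `f̃(X) = f(cX)`. Hence, for a unit `u` and `c = u⁻¹`, the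
polynomial `H_{F,f}(cX, cA)` is the one associated with `f̃` and the equation `F(uZ, Y, u⁻¹X)`.
The equation `(X+1)·Z − 1` is special in that this substitution only moves its base point,
turning it into `(X+u)·Z − 1`.
-/

section CommSemiring

variable {K : Type*} [CommSemiring K] (c : K)

theorem scaleVars_X (i : Fin 2) : scaleVars c (X i) = C c * X i := by
  fin_cases i <;> simp [scaleVars]

theorem scaleVars_C (r : K) : scaleVars c (C r) = C r :=
  (scaleVars c).commutes r

theorem scaleVars_monomial (m : Fin 2 →₀ ℕ) (a : K) :
    scaleVars c (monomial m a) = C (c ^ m.degree) * monomial m a := by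
  simp only [monomial_eq, Finsupp.prod_pow, Fin.prod_univ_two, map_mul, map_pow, scaleVars_C,
    scaleVars_X, Finsupp.degree_eq_sum, Fin.sum_univ_two]
  ring

theorem coeff_scaleVars (m : Fin 2 →₀ ℕ) (G : MvPolynomial (Fin 2) K) :
    coeff m (scaleVars c G) = c ^ m.degree * coeff m G := by
  classical
  induction G using MvPolynomial.induction_on' with
  | monomial k a =>
    rw [scaleVars_monomial, coeff_C_mul, coeff_monomial]
    split_ifs with hkm
    · rw [hkm]
    · simp only [mul_zero]
  | add p q hp hq => rw [map_add, coeff_add, coeff_add, hp, hq, mul_add]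

theorem support_scaleVars_subset (G : MvPolynomial (Fin 2) K) :
    (scaleVars c G).support ⊆ G.support := by
  intro m hm
  rw [mem_support_iff, coeff_scaleVars] at hm
  exact mem_support_iff.mpr (right_ne_zero_of_mul hm)

theorem degreeOf_scaleVars_le (i : Fin 2) (G : MvPolynomial (Fin 2) K) :
    degreeOf i (scaleVars c G) ≤ degreeOf i G := by
  simpa only [degreeOf_eq_sup] using Finset.sup_mono (support_scaleVars_subset c G)

theorem scaleVars_injPoly (f : Polynomial K) :
    scaleVars c (injPoly f) = injPoly (f.comp (Polynomial.C c * Polynomial.X)) := by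
  simp only [injPoly, ← Polynomial.aeval_algHom_apply, Polynomial.aeval_comp, scaleVars_X, map_mul,
    Polynomial.aeval_C, Polynomial.aeval_X, algebraMap_eq]

theorem scaleVars_shiftPoly (f : Polynomial K) :
    scaleVars c (shiftPoly f) = shiftPoly (f.comp (Polynomial.C c * Polynomial.X)) := by
  simp only [shiftPoly, ← Polynomial.aeval_algHom_apply, Polynomial.aeval_comp, scaleVars_X,
    map_add, map_mul, Polynomial.aeval_C, Polynomial.aeval_X, algebraMap_eq, mul_add]

/-- `H = r·Xⁿ + A·G` with `G` of degree smaller than `n` in `X` (so that `n ≥ 1`): the shape of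
`H_{F,f}` that makes `f` a hyper Taylor approximation of `F`. -/
def IsHyperTaylorForm (H : MvPolynomial (Fin 2) K) (r : K) (n : ℕ) (G : MvPolynomial (Fin 2) K) :
    Prop :=
  H = C r * X 0 ^ n + X 1 * G ∧ degreeOf 0 G < n

theorem IsHyperTaylorForm.map_scaleVars {H G : MvPolynomial (Fin 2) K} {r : K} {n : ℕ}
    (h : IsHyperTaylorForm H r n G) :
    IsHyperTaylorForm (scaleVars c H) (r * c ^ n) n (C c * scaleVars c G) := by
  obtain ⟨rfl, hG⟩ := h
  refine ⟨?_, ?_⟩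
  · simp only [map_add, map_mul, map_pow, scaleVars_X, scaleVars_C]
    ring
  · calc degreeOf 0 (C c * scaleVars c G)
      _ ≤ degreeOf 0 (scaleVars c G) := degreeOf_C_mul_le _ _ _
      _ ≤ degreeOf 0 G := degreeOf_scaleVars_le c 0 G
      _ < n := hG

end CommSemiring

section CommRing

variable {K : Type*} [CommRing K]

theorem IsDiffQuot.unique {f : Polynomial K} {Q Q' : MvPolynomial (Fin 2) K}
    (h : IsDiffQuot f Q) (h' : IsDiffQuot f Q') : Q = Q' :=
  X_mul_cancel_left_iff.mp (h.trans h'.symm)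

theorem IsDiffQuot.comp_C_mul_X {f : Polynomial K} {Q : MvPolynomial (Fin 2) K}
    (h : IsDiffQuot f Q) (c : K) :
    IsDiffQuot (f.comp (Polynomial.C c * Polynomial.X)) (C c * scaleVars c Q) :=
  calc X 1 * (C c * scaleVars c Q)
    _ = scaleVars c (X 1 * Q) := by rw [map_mul, scaleVars_X]; ring
    _ = scaleVars c (shiftPoly f - injPoly f) := congrArg (scaleVars c) h
    _ = _ := by rw [map_sub, scaleVars_shiftPoly, scaleVars_injPoly]

/-- The substitution `F(Z, Y, X) ↦ F(uZ, Y, u⁻¹X)`: the effect on a differential equation of the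
change of variable `X ↦ u⁻¹X`, under which a difference quotient picks up the factor `u⁻¹`. -/
noncomputable def rescaleEqn (u : Kˣ) : MvPolynomial (Fin 3) K →ₐ[K] MvPolynomial (Fin 3) K :=
  aeval ![C (u : K) * X 0, X 1, C (↑u⁻¹ : K) * X 2]

theorem Hpoly_rescaleEqn (u : Kˣ) (F : MvPolynomial (Fin 3) K) (f : Polynomial K)
    (Q : MvPolynomial (Fin 2) K) :
    Hpoly (rescaleEqn u F) (f.comp (Polynomial.C (↑u⁻¹ : K) * Polynomial.X))
        (C (↑u⁻¹ : K) * scaleVars (↑u⁻¹ : K) Q) =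
      scaleVars (↑u⁻¹ : K) (Hpoly F f Q) := by
  have C_mul_C_inv : (C (u : K) * C (↑u⁻¹ : K) : MvPolynomial (Fin 2) K) = 1 := by
    rw [← C_mul, u.mul_inv, C_1]
  simp only [Hpoly, rescaleEqn, comp_aeval_apply]
  congr 2
  funext i
  fin_cases i
  · simp [algebraMap_eq, ← mul_assoc, C_mul_C_inv]
  · simp [scaleVars_injPoly]
  · simp [algebraMap_eq, scaleVars_X]

theorem rescaleEqn_X_add_one_mul_Z_sub_one (u : Kˣ) :
    rescaleEqn u ((X 2 + 1) * X 0 - 1) = (X 2 + C (u : K)) * X 0 - 1 := by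
  have C_inv_mul_C : (C (↑u⁻¹ : K) * C (u : K) : MvPolynomial (Fin 3) K) = 1 := by
    rw [← C_mul, u.inv_mul, C_1]
  have image : rescaleEqn u ((X 2 + 1) * X 0 - 1) =
      (C (↑u⁻¹ : K) * X 2 + 1) * (C (u : K) * X 0) - 1 := by
    simp [rescaleEqn]
  rw [image]
  linear_combination X 2 * X 0 * C_inv_mul_C

theorem stmt_5_general (u : Kˣ) {f₁ : Polynomial K} {Q₁ Qt : MvPolynomial (Fin 2) K}
    (hQ₁ : IsDiffQuot f₁ Q₁)
    (hQt : IsDiffQuot (f₁.comp (Polynomial.C (↑u⁻¹ : K) * Polynomial.X)) Qt) :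
    Hpoly ((X 2 + C (u : K)) * X 0 - 1) (f₁.comp (Polynomial.C (↑u⁻¹ : K) * Polynomial.X)) Qt =
      scaleVars (↑u⁻¹ : K) (Hpoly ((X 2 + 1) * X 0 - 1) f₁ Q₁) ∧
    ∀ (r : K) (n : ℕ) (G : MvPolynomial (Fin 2) K),
      IsHyperTaylorForm (Hpoly ((X 2 + 1) * X 0 - 1) f₁ Q₁) r n G →
      IsHyperTaylorForm
        (Hpoly ((X 2 + C (u : K)) * X 0 - 1)
          (f₁.comp (Polynomial.C (↑u⁻¹ : K) * Polynomial.X)) Qt)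
        (r * (↑u⁻¹ : K) ^ n) n (C (↑u⁻¹ : K) * scaleVars (↑u⁻¹ : K) G) := by
  rw [hQt.unique (hQ₁.comp_C_mul_X _), ← rescaleEqn_X_add_one_mul_Z_sub_one, Hpoly_rescaleEqn]
  exact ⟨rfl, fun r n G h => h.map_scaleVars _⟩

end CommRing

/-- The differential equation `F = X·Z − 1` is logarithm-like solvable:
with `F₁ = (X+1)·Z − 1`, `F_{x₀} = (X+x₀)·Z − 1` and `f̃(X) = f₁(x₀⁻¹·X)`, one has
`H_{F_{x₀},f̃}(X,A) = H_{F₁,f₁}(x₀⁻¹X, x₀⁻¹A)`; consequently hyper Taylor approximations of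
`F₁` rescale to hyper Taylor approximations of `F_{x₀}`. -/
theorem stmt_5 (x₀ : ℂ) (hx₀ : x₀ ≠ 0) (f₁ : Polynomial ℂ) (Q₁ Qt : MvPolynomial (Fin 2) ℂ)
    (hQ₁ : IsDiffQuot f₁ Q₁)
    (hQt : IsDiffQuot (f₁.comp (Polynomial.C x₀⁻¹ * Polynomial.X)) Qt) :
    Hpoly ((MvPolynomial.X 2 + MvPolynomial.C x₀) * MvPolynomial.X 0 - 1)
        (f₁.comp (Polynomial.C x₀⁻¹ * Polynomial.X)) Qt =
      scaleVars x₀⁻¹ (Hpoly ((MvPolynomial.X 2 + 1) * MvPolynomial.X 0 - 1) f₁ Q₁) ∧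
    ∀ (r : ℂ) (n : ℕ) (G : MvPolynomial (Fin 2) ℂ), 1 ≤ n → MvPolynomial.degreeOf 0 G < n →
      Hpoly ((MvPolynomial.X 2 + 1) * MvPolynomial.X 0 - 1) f₁ Q₁ =
        MvPolynomial.C r * MvPolynomial.X 0 ^ n + MvPolynomial.X 1 * G →
      Hpoly ((MvPolynomial.X 2 + MvPolynomial.C x₀) * MvPolynomial.X 0 - 1)
          (f₁.comp (Polynomial.C x₀⁻¹ * Polynomial.X)) Qt =
        MvPolynomial.C (r / x₀ ^ n) * MvPolynomial.X 0 ^ n +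
          MvPolynomial.X 1 * (MvPolynomial.C x₀⁻¹ * scaleVars x₀⁻¹ G) ∧
      MvPolynomial.degreeOf 0 (MvPolynomial.C x₀⁻¹ * scaleVars x₀⁻¹ G) < n := by
  obtain ⟨hH, hTaylor⟩ := stmt_5_general (Units.mk0 x₀ hx₀) hQ₁ hQt
  exact ⟨hH, fun r n G _ hG hr => by
    rw [div_eq_mul_inv, ← inv_pow]
    exact hTaylor r n G ⟨hr, hG⟩⟩
end

section
/- Let H ∈ ℝ[X,A] have the form H = r·X^n + A·G with r ∈ ℝ, r ≠ 0, an integer n ≥ 1, and G ∈ ℝ[X,A] whose degree in X is smaller than n. If x ∈ ℝ* is infinite and α ∈ ℝ* is infinitesimal, then the evaluation H(x,α) ≠ 0. -/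
open MvPolynomial Hyperreal

/-!
Measure sizes by the Archimedean valuation `v` of `ℝ*`: it vanishes on nonzero reals, is negative on
infinite elements and positive on infinitesimals. Since `v x ≤ 0`, every monomial of `G` has
valuation at least `n • v x` at `(x, α)`, so `α * G(x, α)` has valuation strictly larger than
`n • v x`, which is the valuation of `r * x ^ n`. Hence the two summands of `H(x, α)` cannot cancel.
-/

section AddValuation

variable {σ R K Γ : Type*} [CommSemiring R] [CommRing K] [LinearOrderedAddCommMonoidWithTop Γ]
  (v : AddValuation K Γ) {s : σ → K} {i : σ} {n : ℕ}

theorem nsmul_le_addValuation_prod_pow (hi : v (s i) ≤ 0) (hs : ∀ k ≠ i, 0 ≤ v (s k))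
    {d : σ →₀ ℕ} (hd : d i ≤ n) : n • v (s i) ≤ v (d.prod fun k e ↦ s k ^ e) := by
  have hrest : 0 ≤ v ((d.erase i).prod fun k e ↦ s k ^ e) :=
    Finset.prod_induction _ (fun a ↦ 0 ≤ v a)
      (fun a b ha hb ↦ (add_nonneg ha hb).trans_eq (v.map_mul a b).symm) v.map_one.ge
      fun k hk ↦ by
        have hki : k ≠ i := by rintro rfl; simp at hk
        rw [v.map_pow]
        exact nsmul_nonneg (hs k hki) _
  calc n • v (s i) ≤ d i • v (s i) := nsmul_le_nsmul_left_of_nonpos hi hd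
    _ ≤ d i • v (s i) + v ((d.erase i).prod fun k e ↦ s k ^ e) := le_add_of_nonneg_right hrest
    _ = v (d.prod fun k e ↦ s k ^ e) := by
      rw [← v.map_pow, ← v.map_mul, Finsupp.mul_prod_erase' d i _ fun _ ↦ pow_zero _]

theorem nsmul_le_addValuation_eval₂ (hi : v (s i) ≤ 0) (hs : ∀ k ≠ i, 0 ≤ v (s k))
    {f : R →+* K} {G : MvPolynomial σ R} (hcoeff : ∀ d, 0 ≤ v (f (G.coeff d)))
    (hG : G.degreeOf i ≤ n) : n • v (s i) ≤ v (eval₂ f s G) := by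
  rw [eval₂_eq]
  refine v.map_le_sum fun d hd ↦ ?_
  rw [v.map_mul]
  exact le_add_of_nonneg_of_le (hcoeff d)
    (nsmul_le_addValuation_prod_pow v hi hs (degreeOf_le_iff.mp hG d hd))

theorem nsmul_lt_addValuation_mul_eval₂ (hi : v (s i) ≤ 0) (hs : ∀ k ≠ i, 0 ≤ v (s k))
    {f : R →+* K} {G : MvPolynomial σ R} (hcoeff : ∀ d, 0 ≤ v (f (G.coeff d)))
    (hG : G.degreeOf i ≤ n) {a : K} (ha : 0 < v a) : n • v (s i) < v (a * eval₂ f s G) := by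
  have hfinite : n • v (s i) ≠ ⊤ := ((nsmul_nonpos hi n).trans_lt (lt_top_of_lt ha)).ne
  calc n • v (s i) = 0 + n • v (s i) := (zero_add _).symm
    _ < v a + n • v (s i) := (add_lt_add_iff_left_of_ne_top hfinite).mpr ha
    _ ≤ v a + v (eval₂ f s G) := by grw [nsmul_le_addValuation_eval₂ v hi hs hcoeff hG]
    _ = v (a * eval₂ f s G) := (v.map_mul _ _).symm

theorem stmt_11_general (hi : v (s i) ≤ 0) (hs : ∀ k ≠ i, 0 ≤ v (s k)) {j : σ}
    (hj : 0 < v (s j)) {f : R →+* K} {r : R} (hr : v (f r) ≤ 0) {G : MvPolynomial σ R}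
    (hcoeff : ∀ d, 0 ≤ v (f (G.coeff d))) (hG : G.degreeOf i ≤ n) :
    eval₂ f s (C r * X i ^ n + X j * G) ≠ 0 := by
  intro hzero
  simp only [eval₂_add, eval₂_mul, eval₂_pow, eval₂_C, eval₂_X] at hzero
  have hlead : v (f r * s i ^ n) ≤ n • v (s i) := by
    rw [v.map_mul, v.map_pow]
    exact add_le_of_nonpos_left hr
  have hcancel : v (f r * s i ^ n) = v (s j * eval₂ f s G) := by
    rw [eq_neg_of_add_eq_zero_left hzero, v.map_neg]
  exact (nsmul_lt_addValuation_mul_eval₂ v hi hs hcoeff hG hj).not_ge (hcancel.ge.trans hlead)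

end AddValuation

theorem addValuation_realToHyper_nonneg (a : ℝ) :
    0 ≤ ArchimedeanClass.addValuation ℝ* (realToHyper a) :=
  archimedeanClassMk_coe_nonneg a

theorem addValuation_realToHyper {a : ℝ} (ha : a ≠ 0) :
    ArchimedeanClass.addValuation ℝ* (realToHyper a) = 0 :=
  archimdeanClassMk_coe ha

/-- If `H = r·X^n + A·G` with `r ≠ 0`, `n ≥ 1`, `deg_X G < n`, and `x`
is infinite while `α` is infinitesimal, then `H(x,α) ≠ 0`. -/
theorem stmt_11 (H G : MvPolynomial (Fin 2) ℝ) (r : ℝ) (n : ℕ) (hr : r ≠ 0) (hn : 1 ≤ n)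
    (hG : MvPolynomial.degreeOf 0 G < n)
    (hH : H = MvPolynomial.C r * MvPolynomial.X 0 ^ n + MvPolynomial.X 1 * G)
    (x α : ℝ*) (hx : x.Infinite) (hα : Infinitesimal α) :
    MvPolynomial.eval₂ realToHyper ![x, α] H ≠ 0 := by
  subst hH
  have hx_neg : ArchimedeanClass.addValuation ℝ* (![x, α] 0) < 0 := infinite_iff.mp hx
  have hα_pos : 0 < ArchimedeanClass.addValuation ℝ* (![x, α] 1) := infinitesimal_iff.mp hα
  have hs : ∀ k ≠ 0, 0 ≤ ArchimedeanClass.addValuation ℝ* (![x, α] k) :=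
    Fin.forall_fin_two.mpr ⟨fun h ↦ absurd rfl h, fun _ ↦ hα_pos.le⟩
  exact stmt_11_general (ArchimedeanClass.addValuation ℝ*) hx_neg.le hs hα_pos
    (addValuation_realToHyper hr).le (fun d ↦ addValuation_realToHyper_nonneg (G.coeff d)) hG.le
end

section
/- For every polynomial f ∈ ℝ[X], every finite hyperreal x ∈ ℝ*, and every nonzero infinitesimal α ∈ ℝ*, the difference quotient (f(x+α) − f(x))/α differs from the evaluation of the formal derivative f' at x by an infinitesimal; equivalently, Q_f(x,α) − f'(x) is infinitesimal, where Q_f is the difference-quotient polynomial of f and f' is the formal (polynomial) derivative of f. -/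
open MvPolynomial Hyperreal

/-!
Expanding `f(X + A)` to second order in `A` and cancelling `A` gives `Q_f = f'(X) + A·R` for some
`R ∈ K[X,A]`. Evaluated at a point where the coefficients, `x` and `a` are all integral for a
valuation `v`, the polynomial `R` is integral too, so `v (Q_f(x,a) - f'(x)) ≤ v a`. The hyperreals
enter through their archimedean valuation: its integers are the finite hyperreals, and the elements
of valuation `< 1` are the infinitesimals.
-/

section Evaluation

variable {K L σ : Type*} [CommSemiring K] [CommSemiring L] (φ : K →+* L)

theorem eval₂_polynomialAeval (p : σ → L) (q : MvPolynomial σ K) (f : Polynomial K) :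
    eval₂ φ p (Polynomial.aeval q f) = f.eval₂ φ (eval₂ φ p q) := by
  rw [Polynomial.aeval_def, algebraMap_eq, ← coe_eval₂Hom, Polynomial.hom_eval₂, eval₂Hom_comp_C]

theorem eval₂_injPoly (p : Fin 2 → L) (f : Polynomial K) :
    eval₂ φ p (injPoly f) = f.eval₂ φ (p 0) := by
  rw [injPoly, eval₂_polynomialAeval, eval₂_X]

theorem eval₂_shiftPoly (p : Fin 2 → L) (f : Polynomial K) :
    eval₂ φ p (shiftPoly f) = f.eval₂ φ (p 0 + p 1) := by
  rw [shiftPoly, eval₂_polynomialAeval, eval₂_add, eval₂_X, eval₂_X]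

end Evaluation

theorem exists_shiftPoly_eq_add_derivative_add {K : Type*} [CommRing K] (f : Polynomial K) :
    ∃ R : MvPolynomial (Fin 2) K,
      shiftPoly f = injPoly f + injPoly (Polynomial.derivative f) * X 1 + R * X 1 ^ 2 := by
  obtain ⟨R, hR⟩ := Polynomial.binomExpansion (f.map C) (X 0 : MvPolynomial (Fin 2) K) (X 1)
  rw [Polynomial.derivative_map] at hR
  simp only [Polynomial.eval_map] at hR
  exact ⟨R, hR⟩

namespace IsDiffQuot

variable {K L Γ₀ : Type*} [CommRing K] {f : Polynomial K} {Q : MvPolynomial (Fin 2) K}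

theorem exists_eq_derivative_add (hQ : IsDiffQuot f Q) :
    ∃ R, Q = injPoly (Polynomial.derivative f) + X 1 * R := by
  obtain ⟨R, hR⟩ := exists_shiftPoly_eq_add_derivative_add f
  refine ⟨R, (X_mul_cancel_left_iff (i := 1)).1 ?_⟩
  calc X 1 * Q = shiftPoly f - injPoly f := hQ
    _ = X 1 * (injPoly (Polynomial.derivative f) + X 1 * R) := by rw [hR]; ring

theorem mul_eval₂ [CommRing L] (hQ : IsDiffQuot f Q) (φ : K →+* L) (x a : L) :
    a * eval₂ φ ![x, a] Q = f.eval₂ φ (x + a) - f.eval₂ φ x := by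
  have h := congrArg (eval₂Hom φ ![x, a]) hQ
  simpa [eval₂_shiftPoly, eval₂_injPoly] using h

theorem eval₂_eq_div [Field L] (hQ : IsDiffQuot f Q) (φ : K →+* L) (x : L) {a : L} (ha : a ≠ 0) :
    eval₂ φ ![x, a] Q = (f.eval₂ φ (x + a) - f.eval₂ φ x) / a := by
  rw [← hQ.mul_eval₂, mul_div_cancel_left₀ _ ha]

theorem valuation_eval₂_sub_derivative_le [CommRing L] [LinearOrderedCommGroupWithZero Γ₀]
    (hQ : IsDiffQuot f Q) (v : Valuation L Γ₀) (φ : K →+* L) (hφ : ∀ r, v (φ r) ≤ 1) {x a : L}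
    (hx : v x ≤ 1) (ha : v a ≤ 1) :
    v (eval₂ φ ![x, a] Q - (Polynomial.derivative f).eval₂ φ x) ≤ v a := by
  obtain ⟨R, rfl⟩ := hQ.exists_eq_derivative_add
  have hR : eval₂ φ ![x, a] R ∈ v.integer :=
    eval₂_mem (fun _ _ ↦ hφ _) (Fin.forall_fin_two.2 ⟨hx, ha⟩)
  calc v (eval₂ φ ![x, a] (injPoly (Polynomial.derivative f) + X 1 * R)
        - (Polynomial.derivative f).eval₂ φ x)
      = v (a * eval₂ φ ![x, a] R) := by simp [eval₂_injPoly]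
    _ = v a * v (eval₂ φ ![x, a] R) := map_mul v _ _
    _ ≤ v a := mul_le_of_le_one_right' hR

end IsDiffQuot

section Hyperreal

open ArchimedeanClass

-- `toValuation` reverses the order of `ArchimedeanClass`, in which `0 < mk x` says that `x` is
-- infinitesimal.
theorem infinitesimal_iff_valuation_lt_one {x : ℝ*} :
    Infinitesimal x ↔ (addValuation ℝ*).toValuation x < 1 :=
  infinitesimal_iff

theorem not_infinite_iff_valuation_le_one {x : ℝ*} :
    ¬ x.Infinite ↔ (addValuation ℝ*).toValuation x ≤ 1 :=
  infinite_iff.not.trans not_lt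

theorem valuation_realToHyper_le_one (r : ℝ) :
    (addValuation ℝ*).toValuation (realToHyper r) ≤ 1 :=
  archimedeanClassMk_coe_nonneg r

end Hyperreal

theorem stmt_13_general {K L Γ₀ : Type*} [CommRing K] [Field L]
    [LinearOrderedCommGroupWithZero Γ₀] (v : Valuation L Γ₀) (φ : K →+* L)
    (hφ : ∀ r, v (φ r) ≤ 1) (f : Polynomial K) (Q : MvPolynomial (Fin 2) K) (hQ : IsDiffQuot f Q)
    (x a : L) (hx : v x ≤ 1) (ha0 : a ≠ 0) (ha : v a ≤ 1) :
    v ((f.eval₂ φ (x + a) - f.eval₂ φ x) / a - (Polynomial.derivative f).eval₂ φ x) ≤ v a ∧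
    v (eval₂ φ ![x, a] Q - (Polynomial.derivative f).eval₂ φ x) ≤ v a := by
  rw [← hQ.eval₂_eq_div φ x ha0, and_self]
  exact hQ.valuation_eval₂_sub_derivative_le v φ hφ hx ha

/-- For every `f ∈ ℝ[X]`, finite `x ∈ ℝ*` and nonzero infinitesimal
`α ∈ ℝ*`, the difference quotient `(f(x+α) − f(x))/α` differs from the formal derivative
`f'(x)` by an infinitesimal; equivalently `Q_f(x,α) − f'(x)` is infinitesimal. -/
theorem stmt_13 (f : Polynomial ℝ) (Q : MvPolynomial (Fin 2) ℝ) (hQ : IsDiffQuot f Q)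
    (x α : ℝ*) (hx : ¬ x.Infinite) (hα0 : α ≠ 0) (hα : Infinitesimal α) :
    Infinitesimal ((Polynomial.eval₂ realToHyper (x + α) f - Polynomial.eval₂ realToHyper x f) / α
      - Polynomial.eval₂ realToHyper x (Polynomial.derivative f)) ∧
    Infinitesimal (MvPolynomial.eval₂ realToHyper ![x, α] Q
      - Polynomial.eval₂ realToHyper x (Polynomial.derivative f)) := by
  simp only [infinitesimal_iff_valuation_lt_one, not_infinite_iff_valuation_le_one] at hx hα ⊢
  exact (stmt_13_general _ _ valuation_realToHyper_le_one f Q hQ x α hx hα0 hα.le).imp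
    (·.trans_lt hα) (·.trans_lt hα)
end
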